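/- arXiv:2605.09332 — 2 statements merged into one kernel-verified Lean document; each statement's English description precedes it below -/
import Mathlib

section
/- Let G be a second-price pacing game with n buyers, goods [m], and valuations v admitting a type map t : [m] → [c] with v_{ij} = w_{i, t(j)} for all i, j, and let Ĝ be the aggregated game with c goods and valuations v̂_{iτ} = |t⁻¹(τ)| · w_{iτ}. Fix any pacing multipliers α̂ ∈ [0,1]^n and any allocation x̂ for Ĝ, and define x_{ij} = x̂_{i, t(j)}. Then every buyer's total payment is preserved: for each buyer i, ∑_{j∈[m]} x_{ij} · p_j(α̂; v) = ∑_{τ∈[c]} x̂_{iτ} · p_τ(α̂; v̂), where p_j(α̂; v) and p_τ(α̂; v̂) denote the second-highest paced bids on good j in G and on aggregate good τ in Ĝ, respectively. -/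
/-!
The second-highest paced bid is homogeneous, for nonnegative factors, in the valuations (`pBid_scale`).
A good of type `τ` has the price of the profile `w · τ`, while the aggregate good has that
price multiplied by the number of goods of type `τ`. Summing over the fibres of `t`
identifies the two payments.
-/

/-- The highest paced bid on good `j`. -/
noncomputable def hBid {n : ℕ} [NeZero n] {G : Type*} (v : Fin n → G → ℝ)
    (α : Fin n → ℝ) (j : G) : ℝ :=
  Finset.univ.sup' Finset.univ_nonempty (fun i => α i * v i j)

/-- The second-highest paced bid on good `j`: the largest element of the list of paced
bids after removing one occurrence of its maximum (and `0` when nothing remains). -/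
noncomputable def pBid {n : ℕ} [NeZero n] {G : Type*} (v : Fin n → G → ℝ)
    (α : Fin n → ℝ) (j : G) : ℝ :=
  ((List.ofFn (fun i : Fin n => α i * v i j)).erase (hBid v α j)).foldr max 0

/-- `(α, x)` is a second-price pacing equilibrium for valuations `v` and budgets `B`:
`α ∈ [0,1]ⁿ`, `x ∈ [0,1]^{n×m}` with column sums at most one, and conditions (a)–(d). -/
def IsSPPE {n : ℕ} [NeZero n] {G : Type*} [Fintype G] (v : Fin n → G → ℝ)
    (B : Fin n → ℝ) (α : Fin n → ℝ) (x : Fin n → G → ℝ) : Prop :=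
  (∀ i, α i ∈ Set.Icc (0:ℝ) 1) ∧
  (∀ i j, x i j ∈ Set.Icc (0:ℝ) 1) ∧
  (∀ j, ∑ i, x i j ≤ 1) ∧
  (∀ i j, 0 < x i j → α i * v i j = hBid v α j) ∧
  (∀ j, 0 < hBid v α j → ∑ i, x i j = 1) ∧
  (∀ i, ∑ j, x i j * pBid v α j ≤ B i) ∧
  (∀ i, ∑ j, x i j * pBid v α j < B i → α i = 1)

/-- Scaling a good's valuations by `k ≥ 0` scales its second-highest paced bid by `k`: `max`
commutes with `k * ·`, and for `k > 0` so does erasing one copy of the maximum, since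
`k * ·` is then injective. -/
theorem pBid_scale {n : ℕ} [NeZero n] {G H : Type*} (v : Fin n → G → ℝ)
    (u : Fin n → H → ℝ) (α : Fin n → ℝ) (g : G) (h : H) (k : ℝ) (hk : 0 ≤ k)
    (huv : ∀ i, u i h = k * v i g) : pBid u α h = k * pBid v α g := by
  have hbid : ∀ i, α i * u i h = k * (α i * v i g) := fun i => by rw [huv]; ring
  have hfold : ∀ l : List ℝ, (l.map (k * ·)).foldr max 0 = k * l.foldr max 0 := by
    intro l
    induction l with
    | nil => simp
    | cons a l ih => simp only [List.map_cons, List.foldr_cons, ih, mul_max_of_nonneg _ _ hk]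
  have hlist : List.ofFn (fun i : Fin n => α i * u i h) =
      (List.ofFn (fun i : Fin n => α i * v i g)).map (k * ·) := by
    rw [List.map_ofFn]
    exact congrArg List.ofFn (funext hbid)
  rcases hk.eq_or_lt with rfl | hpos
  · -- Multiplication by zero is not injective, but then every remaining bid is `0`.
    have hzero : ∀ l : List ℝ, (∀ a ∈ l, a = 0) → l.foldr max 0 = 0 := by
      intro l hl
      induction l with
      | nil => rfl
      | cons a l ih =>
        rw [List.foldr_cons, ih fun b hb => hl b (List.mem_cons_of_mem _ hb),
          hl a List.mem_cons_self, max_self]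
    rw [zero_mul]
    refine hzero _ fun a ha => ?_
    obtain ⟨i, rfl⟩ := List.mem_ofFn.mp (List.mem_of_mem_erase ha)
    simp [hbid]
  · have hmax : hBid u α h = k * hBid v α g := by
      unfold hBid
      simp only [hbid]
      exact (Finset.apply_sup'_eq_sup'_comp Finset.univ_nonempty (k * ·)
        fun a b => mul_max_of_nonneg a b hk).symm
    unfold pBid
    rw [hmax, hlist, ← hfold, List.map_erase (mul_right_injective₀ hpos.ne')]

open scoped Classical in
/-- Under type aggregation, every buyer's total payment is preserved: for any
multipliers `α̂ ∈ [0,1]ⁿ` and any allocation `x̂` of the aggregated game, the expanded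
allocation `x i j = x̂ i (t j)` yields the same total payment for each buyer. -/
theorem aggregate_payment_preserved (n m c : ℕ) [NeZero n]
    (w : Fin n → Fin c → ℝ) (t : Fin m → Fin c)
    (v : Fin n → Fin m → ℝ) (htype : ∀ i j, v i j = w i (t j))
    (hw : ∀ i τ, 0 ≤ w i τ)
    (vhat : Fin n → Fin c → ℝ)
    (hvhat : ∀ i τ, vhat i τ =
      ((Finset.univ.filter (fun j : Fin m => t j = τ)).card : ℝ) * w i τ)
    (αhat : Fin n → ℝ) (hα : ∀ i, αhat i ∈ Set.Icc (0:ℝ) 1)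
    (xhat : Fin n → Fin c → ℝ) (hx : ∀ i τ, xhat i τ ∈ Set.Icc (0:ℝ) 1)
    (hxsum : ∀ τ, ∑ i, xhat i τ ≤ 1)
    (x : Fin n → Fin m → ℝ) (hxdef : ∀ i j, x i j = xhat i (t j)) :
    ∀ i, ∑ j, x i j * pBid v αhat j = ∑ τ, xhat i τ * pBid vhat αhat τ := by
  intro i
  have hG : ∀ j, pBid v αhat j = pBid w αhat (t j) := fun j => by
    simpa using pBid_scale w v αhat (t j) j 1 zero_le_one fun i => by rw [htype, one_mul]
  have hA : ∀ τ, pBid vhat αhat τ =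
      ((Finset.univ.filter (fun j : Fin m => t j = τ)).card : ℝ) * pBid w αhat τ := fun τ =>
    pBid_scale w vhat αhat τ τ _ (Nat.cast_nonneg _) fun i => hvhat i τ
  simp only [hG, hA, hxdef]
  -- Group the goods by type: the summand is constant on each fibre of `t`.
  rw [← Finset.sum_fiberwise Finset.univ t]
  refine Finset.sum_congr rfl fun τ _ => ?_
  rw [Finset.sum_congr rfl (g := fun _ => xhat i τ * pBid w αhat τ)
    fun j hj => by rw [(Finset.mem_filter.mp hj).2], Finset.sum_const, nsmul_eq_mul]
  ring
end

section
/- Completeness of the λ-space reformulation: Let (α, x) be a second-price pacing equilibrium of a game in which every good has a buyer with strictly positive valuation (i.e., for every j ∈ [m] there is some i with v_{ij} > 0). Define λ_j = h_j(α) for each good j and y_{ij} = x_{ij} · p_j(α) for each buyer i and good j. Then: (i) λ_j > 0 for all j; (ii) α_i = min({1} ∪ {λ_j / v_{ij} : j with v_{ij} > 0}) for all i; (iii) the set T_j = {i : α_i v_{ij} = λ_j} is nonempty for all j; (iv) y_{ij} ≥ 0 with y_{ij} = 0 for i ∉ T_j, ∑_{i∈T_j} y_{ij} = p_j(α) for all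 j; and (v) ∑_{j∈[m]} y_{ij} ≤ B_i for all i, with equality whenever α_i < 1. -/
/-!
The key point is that every multiplier is strictly positive. If `α i = 0`, then by (a) buyer `i`
can only receive goods whose highest bid is `0`; since `0 ≤ p_j ≤ h_j`, such goods are free, so the
buyer spends `0 < B i` and (d) forces `α i = 1`, a contradiction. As every good is positively
valued by someone, all highest bids are therefore positive, and (b) says each good is fully
allocated.

In the minimum formula, `α i ≤ 1` and `α i * v i j ≤ h_j` give one inequality. For attainment, a
buyer with `α i < 1` exhausts a positive budget, hence wins some good `j` at a positive price, and
(a) gives `α i = h_j / v i j` there.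
-/

lemma le_hBid {n : ℕ} [NeZero n] {G : Type*} (v : Fin n → G → ℝ) (α : Fin n → ℝ) (j : G)
    (i : Fin n) : α i * v i j ≤ hBid v α j :=
  Finset.le_sup' (fun i => α i * v i j) (Finset.mem_univ i)

lemma List.foldr_max_zero_nonneg (l : List ℝ) : 0 ≤ l.foldr max 0 := by
  induction l with
  | nil => simp
  | cons a l ih => exact le_max_of_le_right ih

lemma List.foldr_max_zero_le (l : List ℝ) (c : ℝ) (hc : 0 ≤ c) (h : ∀ a ∈ l, a ≤ c) :
    l.foldr max 0 ≤ c := by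
  induction l with
  | nil => simpa using hc
  | cons a l ih =>
    exact max_le (h a (by simp)) (ih fun b hb => h b (by simp [hb]))

lemma pBid_nonneg {n : ℕ} [NeZero n] {G : Type*} (v : Fin n → G → ℝ) (α : Fin n → ℝ) (j : G) :
    0 ≤ pBid v α j :=
  List.foldr_max_zero_nonneg _

/-- The hypothesis `0 ≤ hBid v α j` is needed because `pBid` is truncated below at `0`. -/
lemma pBid_le_hBid {n : ℕ} [NeZero n] {G : Type*} (v : Fin n → G → ℝ) (α : Fin n → ℝ) (j : G)
    (h : 0 ≤ hBid v α j) : pBid v α j ≤ hBid v α j := by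
  refine List.foldr_max_zero_le _ _ h fun a ha => ?_
  obtain ⟨i, rfl⟩ := List.mem_ofFn.1 (List.mem_of_mem_erase ha)
  exact le_hBid v α j i

/-- A buyer with multiplier `0` would win only free goods, hence leave its budget unspent. -/
lemma IsSPPE.alpha_pos {n : ℕ} [NeZero n] {G : Type*} [Fintype G] {v : Fin n → G → ℝ}
    {B α : Fin n → ℝ} {x : Fin n → G → ℝ} (heq : IsSPPE v B α x) (hB : ∀ i, 0 < B i)
    (i : Fin n) : 0 < α i := by
  obtain ⟨hα, hx, -, ha, -, -, hd⟩ := heq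
  refine lt_of_le_of_ne (hα i).1 fun h0 => ?_
  have hz : ∑ j, x i j * pBid v α j = 0 := by
    refine Finset.sum_eq_zero fun j _ => ?_
    rcases (hx i j).1.eq_or_lt with h | h
    · simp [← h]
    · have hh : hBid v α j = 0 := by rw [← ha i j h, ← h0, zero_mul]
      have hp : pBid v α j = 0 :=
        le_antisymm (hh ▸ pBid_le_hBid v α j hh.ge) (pBid_nonneg v α j)
      simp [hp]
  have := hd i (hz ▸ hB i)
  linarith

open scoped Classical in
/-- Completeness of the λ-space reformulation: in any SPPE of a game where every good
is positively valued by some buyer, setting `λ_j = h_j(α)` and `y i j = x i j * p_j(α)`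
yields: positive highest bids, the minimum formula for `α`, nonempty tie sets, payments
supported on tie sets that clear each good's second price, and budget feasibility with
exhaustion for every paced buyer. -/
theorem sppe_lambda_complete (n m : ℕ) [NeZero n] (v : Fin n → Fin m → ℝ)
    (B : Fin n → ℝ) (hv : ∀ i j, 0 ≤ v i j) (hB : ∀ i, 0 < B i)
    (hpos : ∀ j, ∃ i, 0 < v i j)
    (α : Fin n → ℝ) (x : Fin n → Fin m → ℝ) (heq : IsSPPE v B α x)
    (lam : Fin m → ℝ) (hlam : ∀ j, lam j = hBid v α j)
    (y : Fin n → Fin m → ℝ) (hy : ∀ i j, y i j = x i j * pBid v α j)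
    (T : Fin m → Finset (Fin n))
    (hT : ∀ j, T j = Finset.univ.filter (fun i => α i * v i j = lam j)) :
    (∀ j, 0 < lam j) ∧
    (∀ i, α i = (insert (1:ℝ)
      ((Finset.univ.filter (fun j : Fin m => 0 < v i j)).image
        (fun j => lam j / v i j))).inf' (Finset.insert_nonempty _ _) id) ∧
    (∀ j, (T j).Nonempty) ∧
    (∀ i j, 0 ≤ y i j) ∧
    (∀ i j, i ∉ T j → y i j = 0) ∧
    (∀ j, ∑ i ∈ T j, y i j = pBid v α j) ∧
    (∀ i, ∑ j, y i j ≤ B i) ∧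
    (∀ i, α i < 1 → ∑ j, y i j = B i) := by
  have hαpos := heq.alpha_pos hB
  obtain ⟨hα, hx, -, ha, hb, hc, hd⟩ := heq
  have hpos' : ∀ j, 0 < hBid v α j := fun j => by
    obtain ⟨i, hi⟩ := hpos j
    exact (mul_pos (hαpos i) hi).trans_le (le_hBid v α j i)
  have hspend : ∀ i, α i < 1 → ∑ j, x i j * pBid v α j = B i := fun i hi =>
    (hc i).antisymm (not_lt.1 fun h => hi.ne (hd i h))
  have hzero : ∀ i j, i ∉ T j → y i j = 0 := by
    intro i j hi
    have hxz : x i j = 0 := by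
      refine le_antisymm (not_lt.1 fun h => hi ?_) (hx i j).1
      simp [hT, hlam, ha i j h]
    rw [hy, hxz, zero_mul]
  refine ⟨fun j => hlam j ▸ hpos' j, fun i => ?_, fun j => ?_, fun i j => ?_, hzero,
    fun j => ?_, fun i => ?_, fun i hi => ?_⟩
  · apply le_antisymm
    · refine Finset.le_inf' _ _ fun b hbm => ?_
      rcases Finset.mem_insert.1 hbm with rfl | hbm
      · exact (hα i).2
      · obtain ⟨j, hj, rfl⟩ := Finset.mem_image.1 hbm
        rw [id, le_div_iff₀ (Finset.mem_filter.1 hj).2, hlam]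
        exact le_hBid v α j i
    · rcases (hα i).2.eq_or_lt with h | h
      · exact (Finset.inf'_le id (Finset.mem_insert_self _ _)).trans h.ge
      · obtain ⟨j, -, hj⟩ : ∃ j ∈ Finset.univ, 0 < x i j * pBid v α j := by
          apply Finset.exists_lt_of_sum_lt
          simpa [hspend i h] using hB i
        have hxj : 0 < x i j := pos_of_mul_pos_left hj (pBid_nonneg v α j)
        have hvj : 0 < v i j :=
          pos_of_mul_pos_right ((ha i j hxj).symm ▸ hpos' j) (hαpos i).le
        have heqj : lam j / v i j = α i := by
          rw [div_eq_iff hvj.ne', hlam, ha i j hxj]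
        refine (Finset.inf'_le id (Finset.mem_insert_of_mem (Finset.mem_image_of_mem _
          (Finset.mem_filter.2 ⟨Finset.mem_univ j, hvj⟩)))).trans heqj.le
  · obtain ⟨i, -, hi⟩ := Finset.exists_mem_eq_sup' Finset.univ_nonempty (fun i => α i * v i j)
    refine ⟨i, ?_⟩
    rw [hT, Finset.mem_filter, hlam]
    exact ⟨Finset.mem_univ i, hi.symm⟩
  · exact hy i j ▸ mul_nonneg (hx i j).1 (pBid_nonneg v α j)
  · rw [Finset.sum_subset (Finset.subset_univ _) fun i _ hi => hzero i j hi]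
    simp only [hy]
    rw [← Finset.sum_mul, hb j (hpos' j), one_mul]
  · simpa only [hy] using hc i
  · simpa only [hy] using hspend i hi
end
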